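/- Eventual completeness of limited belief: let s be a finite set of clauses, α an objective formula, and F a finite set of function terms containing all function terms occurring in s and in α. If s ⊨ α (classical entailment), then s ⊨ˢ B_{|F|} α. -/

import Mathlib

/-! ## Limited belief: basic syntax and semantics (Schwering 2017, quantifier-free). -/

/-- Standard names (a countably infinite supply). -/
abbrev Name := ℕ

/-- Function terms `f(n₁,…,n_j)`: a function symbol applied to standard names. -/
structure FnTerm where
  sym : ℕ
  args : List Name
deriving DecidableEq, Inhabited

/-- Literals `t ≈ n` (pos) and `t ≉ n` (neg). -/
inductive Lit where
  | pos (t : FnTerm) (n : Name)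
  | neg (t : FnTerm) (n : Name)
deriving DecidableEq

instance : Inhabited Lit := ⟨.pos default 0⟩

/-- The left-hand side (function term) of a literal. -/
def Lit.lhs : Lit → FnTerm
  | .pos t _ => t
  | .neg t _ => t

/-- The right-hand side (standard name) of a literal. -/
def Lit.rhs : Lit → Name
  | .pos _ n => n
  | .neg _ n => n

/-- The negation `¬ℓ` of a literal. -/
def Lit.negate : Lit → Lit
  | .pos t n => .neg t n
  | .neg t n => .pos t n

/-- Names occurring in a literal. -/
def Lit.names (ℓ : Lit) : Finset Name := insert ℓ.rhs ℓ.lhs.args.toFinset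

/-- Two literals are complementary iff they are of the form `t ≈ n` and `t ≉ n`,
or of the form `t ≈ n` and `t ≈ n'` for distinct `n, n'`. -/
def Lit.complementary : Lit → Lit → Bool
  | .pos t n, .neg t' n' => t == t' && n == n'
  | .neg t n, .pos t' n' => t == t' && n == n'
  | .pos t n, .pos t' n' => t == t' && n != n'
  | .neg _ _, .neg _ _ => false

/-- A clause is a (finite) set of literals. -/
abbrev Clause := Finset Lit

/-- Unit propagation of clause `c` with literal `ℓ`: remove from `c` all
literals complementary to `ℓ`. -/
def Clause.prop (c : Clause) (ℓ : Lit) : Clause :=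
  c.filter (fun ℓ' => Lit.complementary ℓ' ℓ = false)

/-- `c₁` subsumes `c₂` iff for every `t ≈ n ∈ c₁`, `t ≈ n ∈ c₂` or `t ≉ n' ∈ c₂`
for some `n' ≠ n`, and for every `t ≉ n ∈ c₁`, `t ≉ n ∈ c₂`. -/
def Clause.subsumes (c₁ c₂ : Clause) : Prop :=
  (∀ t n, Lit.pos t n ∈ c₁ → Lit.pos t n ∈ c₂ ∨ ∃ n', n' ≠ n ∧ Lit.neg t n' ∈ c₂) ∧
  (∀ t n, Lit.neg t n ∈ c₁ → Lit.neg t n ∈ c₂)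

/-- `UP s`: the closure of the set of clauses `s` under unit propagation and
subsumption.  `UP s c` means `c ∈ UP(s)`. -/
inductive UP (s : Set Clause) : Clause → Prop
  | mem {c : Clause} : c ∈ s → UP s c
  | unit {c : Clause} {ℓ : Lit} : UP s {ℓ} → UP s c → UP s (c.prop ℓ)
  | sub {c₁ c₂ : Clause} : UP s c₁ → c₁.subsumes c₂ → UP s c₂

/-- Objective formulas: literals (`atom` is `t ≈ n`, `not atom` is `t ≉ n`),
negation and disjunction. -/
inductive Form where
  | atom (t : FnTerm) (n : Name)
  | not (φ : Form)
  | or (φ ψ : Form)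
deriving DecidableEq

/-- `α ∧ β` abbreviates `¬(¬α ∨ ¬β)`. -/
def Form.and (φ ψ : Form) : Form := .not (.or (.not φ) (.not ψ))

/-- `α → β` abbreviates `¬α ∨ β`. -/
def Form.imp (φ ψ : Form) : Form := .or (.not φ) ψ

/-- A formula is (syntactically) a clause iff it is a disjunction of literals. -/
def Form.isClause : Form → Bool
  | .atom _ _ => true
  | .not (.atom _ _) => true
  | .not _ => false
  | .or φ ψ => φ.isClause && ψ.isClause

/-- The set of literals of a clause-formula. -/
def Form.lits : Form → Clause
  | .atom t n => {Lit.pos t n}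
  | .not (.atom t n) => {Lit.neg t n}
  | .not _ => ∅
  | .or φ ψ => φ.lits ∪ ψ.lits

/-- The limited-belief truth relation `s ⊨ˢ α` for objective formulas:
a clause is true iff it is in `UP(s)`; a non-clause disjunction is true iff one
of its disjuncts is; `¬(α ∨ β)` is true iff `¬α` and `¬β` are; `¬¬α` is true
iff `α` is. -/
def sat (s : Set Clause) : Form → Prop
  | .atom t n => UP s {Lit.pos t n}
  | .not (.atom t n) => UP s {Lit.neg t n}
  | .not (.not φ) => sat s φ
  | .not (.or φ ψ) => sat s (.not φ) ∧ sat s (.not ψ)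
  | .or φ ψ => if (Form.or φ ψ).isClause then UP s (Form.or φ ψ).lits
               else sat s φ ∨ sat s ψ

/-- `satB s k α` is `s ⊨ˢ B_k α`: `B₀ α` holds iff `α` does, and `B_{k+1} α`
holds iff for some function term `t`, for all names `n`,
`s ∪ {t ≈ n} ⊨ˢ B_k α`. -/
def satB (s : Set Clause) : ℕ → Form → Prop
  | 0, φ => sat s φ
  | k+1, φ => ∃ t : FnTerm, ∀ n : Name, satB (s ∪ {({Lit.pos t n} : Clause)}) k φ

/-- A world maps function terms to standard names. -/
abbrev World := FnTerm → Name

/-- Classical truth of a literal in a world. -/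
def Lit.holds (w : World) : Lit → Prop
  | .pos t n => w t = n
  | .neg t n => w t ≠ n

/-- Classical truth of a clause in a world. -/
def Clause.holds (w : World) (c : Clause) : Prop := ∃ ℓ ∈ c, ℓ.holds w

/-- Classical truth of an objective formula in a world. -/
def wsat (w : World) : Form → Prop
  | .atom t n => w t = n
  | .not φ => ¬ wsat w φ
  | .or φ ψ => wsat w φ ∨ wsat w ψ

/-- Classical entailment `s ⊨ α`. -/
def entails (s : Set Clause) (φ : Form) : Prop :=
  ∀ w : World, (∀ c ∈ s, c.holds w) → wsat w φ

/-- Classical entailment of a clause (disjunction of its literals). -/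
def entailsClause (s : Set Clause) (c : Clause) : Prop :=
  ∀ w : World, (∀ c' ∈ s, c'.holds w) → c.holds w

/-- Function terms mentioned in a formula. -/
def Form.terms : Form → Finset FnTerm
  | .atom t _ => {t}
  | .not φ => φ.terms
  | .or φ ψ => φ.terms ∪ ψ.terms

/-- Standard names mentioned in a formula. -/
def Form.names : Form → Finset Name
  | .atom t n => insert n t.args.toFinset
  | .not φ => φ.names
  | .or φ ψ => φ.names ∪ ψ.names

theorem UP.of_empty {s : Set Clause} (h : UP s ∅) (c : Clause) : UP s c :=
  UP.sub h ⟨by simp, by simp⟩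

theorem sat_of_empty {s : Set Clause} (h : UP s ∅) (φ : Form) : sat s φ ∧ sat s (.not φ) := by
  induction φ with
  | atom t n => exact ⟨by simpa [sat] using h.of_empty _, by simpa [sat] using h.of_empty _⟩
  | not φ ih => exact ⟨ih.2, by simpa [sat] using ih.1⟩
  | or φ ψ ih1 ih2 =>
    refine ⟨?_, ?_⟩
    · rw [sat]
      split_ifs
      · exact h.of_empty _
      · exact Or.inl ih1.1
    · rw [sat]
      exact ⟨ih1.2, ih2.2⟩

theorem lit_UP {s : Set Clause} {w : World} {F : Finset FnTerm}
    (hu : ∀ t ∈ F, UP s {Lit.pos t (w t)}) (ℓ : Lit) (hF : ℓ.lhs ∈ F) (hh : ℓ.holds w) :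
    UP s {ℓ} := by
  cases ℓ with
  | pos t n =>
    have hh : w t = n := hh
    subst hh
    exact hu t hF
  | neg t n =>
    have hh : w t ≠ n := hh
    refine UP.sub (hu t hF) ⟨?_, by simp⟩
    intro t' n' hm
    simp only [Finset.mem_singleton, Lit.pos.injEq] at hm
    obtain ⟨rfl, rfl⟩ := hm
    exact Or.inr ⟨n, hh.symm, by simp⟩

theorem clause_UP {s : Set Clause} {ℓ : Lit} {c : Clause} (h : UP s {ℓ}) (hm : ℓ ∈ c) :
    UP s c := by
  refine UP.sub h ⟨?_, ?_⟩
  · intro t n ht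
    rw [Finset.mem_singleton] at ht
    exact Or.inl (ht ▸ hm)
  · intro t n ht
    rw [Finset.mem_singleton] at ht
    exact ht ▸ hm

theorem lits_holds {w : World} (φ : Form) (hc : φ.isClause = true) (hw : wsat w φ) :
    ∃ ℓ ∈ φ.lits, ℓ.holds w ∧ ℓ.lhs ∈ φ.terms := by
  induction φ with
  | atom t n => exact ⟨Lit.pos t n, by simp [Form.lits], hw, by simp [Form.terms, Lit.lhs]⟩
  | not φ ih =>
    cases φ with
    | atom t n => exact ⟨Lit.neg t n, by simp [Form.lits], hw, by simp [Form.terms, Lit.lhs]⟩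
    | not φ => simp [Form.isClause] at hc
    | or φ ψ => simp [Form.isClause] at hc
  | or φ ψ ih1 ih2 =>
    simp only [Form.isClause, Bool.and_eq_true] at hc
    rcases hw with hw | hw
    · obtain ⟨ℓ, h1, h2, h3⟩ := ih1 hc.1 hw
      exact ⟨ℓ, by simp [Form.lits, h1], h2, by simp [Form.terms, h3]⟩
    · obtain ⟨ℓ, h1, h2, h3⟩ := ih2 hc.2 hw
      exact ⟨ℓ, by simp [Form.lits, h1], h2, by simp [Form.terms, h3]⟩

theorem sat_of_wsat {s : Set Clause} {w : World} {F : Finset FnTerm}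
    (hu : ∀ t ∈ F, UP s {Lit.pos t (w t)}) (φ : Form) (hF : φ.terms ⊆ F) :
    (wsat w φ → sat s φ) ∧ (¬ wsat w φ → sat s (.not φ)) := by
  induction φ with
  | atom t n =>
    have ht : t ∈ F := hF (by simp [Form.terms])
    refine ⟨fun h => ?_, fun h => ?_⟩
    · rw [sat]; exact lit_UP hu (Lit.pos t n) ht h
    · rw [sat]; exact lit_UP hu (Lit.neg t n) ht h
  | not φ ih =>
    have ih := ih hF
    refine ⟨ih.2, fun h => ?_⟩
    rw [sat]
    exact ih.1 (not_not.mp h)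
  | or φ ψ ih1 ih2 =>
    have ih1 := ih1 (fun x hx => hF (by simp [Form.terms, hx]))
    have ih2 := ih2 (fun x hx => hF (by simp [Form.terms, hx]))
    refine ⟨fun h => ?_, fun h => ?_⟩
    · rw [sat]
      split_ifs with hc
      · obtain ⟨ℓ, h1, h2, h3⟩ := lits_holds _ hc h
        exact clause_UP (lit_UP hu ℓ (hF h3) h2) h1
      · exact h.imp ih1.1 ih2.1
    · rw [sat]
      exact ⟨ih1.2 fun h' => h (Or.inl h'), ih2.2 fun h' => h (Or.inr h')⟩

theorem empty_UP {s : Set Clause} {w : World} {F : Finset FnTerm}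
    (hu : ∀ t ∈ F, UP s {Lit.pos t (w t)}) (c : Clause) (hc : UP s c)
    (hF : ∀ ℓ ∈ c, Lit.lhs ℓ ∈ F) (hw : ¬ Clause.holds w c) : UP s ∅ := by
  induction c using Finset.strongInduction with
  | H c ih =>
    rcases c.eq_empty_or_nonempty with rfl | ⟨ℓ, hℓ⟩
    · exact hc
    · have hcomp : Lit.complementary ℓ (Lit.pos ℓ.lhs (w ℓ.lhs)) = true := by
        have hn : ¬ ℓ.holds w := fun h => hw ⟨ℓ, hℓ, h⟩
        cases ℓ with
        | pos t n =>
          have hn : ¬ (w t = n) := hn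
          simp [Lit.complementary, Lit.lhs, Ne.symm hn]
        | neg t n =>
          have hn : w t = n := not_not.mp hn
          simp [Lit.complementary, Lit.lhs, hn]
      have hsub : Clause.prop c (Lit.pos ℓ.lhs (w ℓ.lhs)) ⊆ c := Finset.filter_subset _ _
      refine ih (Clause.prop c (Lit.pos ℓ.lhs (w ℓ.lhs))) ?_ (UP.unit (hu _ (hF ℓ hℓ)) hc)
        (fun ℓ' h => hF ℓ' (hsub h)) (fun ⟨ℓ', h, h'⟩ => hw ⟨ℓ', hsub h, h'⟩)
      refine Finset.ssubset_iff_subset_ne.mpr ⟨hsub, fun he => ?_⟩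
      rw [← he] at hℓ
      have := (Finset.mem_filter.mp hℓ).2
      simp [hcomp] at this

theorem satB_of_forall (φ : Form) (G : Finset FnTerm) : ∀ s : Set Clause,
    (∀ w : World, sat (s ∪ {c | ∃ t ∈ G, c = {Lit.pos t (w t)}}) φ) → satB s G.card φ := by
  induction G using Finset.induction_on with
  | empty =>
    intro s h
    simpa [satB] using h (fun _ => 0)
  | insert t G ht ih =>
    intro s h
    rw [Finset.card_insert_of_notMem ht, satB]
    refine ⟨t, fun n => ih _ fun w => ?_⟩
    have := h (Function.update w t n)
    convert this using 1
    rw [Set.union_assoc]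
    congr 1
    ext c
    have hG : ∀ t' ∈ G, Function.update w t n t' = w t' := fun t' h' =>
      Function.update_of_ne (by rintro rfl; exact ht h') _ _
    simp only [Set.mem_union, Set.mem_singleton_iff, Set.mem_ofPred_eq, Finset.exists_mem_insert,
      Function.update_self]
    refine or_congr Iff.rfl (exists_congr fun t' => and_congr_right fun h' => ?_)
    rw [hG t' h']

/-- **Eventual completeness of limited belief**: if `s` is finite, `F` contains
all function terms occurring in `s` and `α`, and `s ⊨ α` classically, then
`s ⊨ˢ B_{|F|} α`. -/
theorem limited_belief_eventually_complete (s : Set Clause) (hfin : s.Finite)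
    (α : Form) (F : Finset FnTerm)
    (hsF : ∀ c ∈ s, ∀ ℓ ∈ c, Lit.lhs ℓ ∈ F) (hαF : α.terms ⊆ F)
    (h : entails s α) : satB s F.card α := by
  refine satB_of_forall α F s fun w => ?_
  have hu : ∀ t ∈ F, UP (s ∪ {c | ∃ t ∈ F, c = {Lit.pos t (w t)}}) {Lit.pos t (w t)} :=
    fun t ht => UP.mem (Or.inr ⟨t, ht, rfl⟩)
  by_cases hw : ∀ c ∈ s, c.holds w
  · exact (sat_of_wsat hu α hαF).1 (h w hw)
  · push Not at hw
    obtain ⟨c, hc, hcw⟩ := hw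
    exact (sat_of_empty (empty_UP hu c (UP.mem (Or.inl hc)) (hsF c hc) hcw) α).1
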